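/- arXiv:1304.2328 — 2 statements merged into one kernel-verified Lean document; each statement's English description precedes it below -/
import Mathlib

section
/- For every X ∈ M_m ⊗ M_n, the realignment map preserves the projective tensor norm: ‖L(X)‖_γ = ‖X‖_{γ,1}, where on the left the γ-norm is computed with respect to the tensor factorization M_{m,n} ⊗ M_{m,n}. -/
open scoped Kronecker ComplexOrder
open Matrix

namespace Ent

variable {ι κ : Type*} [Fintype ι] [Fintype κ]

/-- Inner product ⟨v,w⟩ = Σᵢ conj(v i) * (w i) (conjugate-linear in the first argument). -/
noncomputable def vinner (v w : ι → ℂ) : ℂ := dotProduct (star v) w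

/-- An elementary (product) tensor a ⊗ b in ℂ^ι ⊗ ℂ^κ. -/
def prodVec (a : ι → ℂ) (b : κ → ℂ) : ι × κ → ℂ := fun p => a p.1 * b p.2

/-- `v` has Schmidt rank at most `k`. -/
def SchmidtRankLE (k : ℕ) (v : ι × κ → ℂ) : Prop :=
  ∃ (a : Fin k → ι → ℂ) (b : Fin k → κ → ℂ), v = ∑ i, prodVec (a i) (b i)

/-- The rank-one operator |v⟩⟨w|. -/
noncomputable def ketBra (v : ι → ℂ) (w : κ → ℂ) : Matrix ι κ ℂ :=
  Matrix.vecMulVec v (star w)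

/-- A finite family of vectors is orthonormal. -/
def Orthonormal' {N : Type*} [DecidableEq N] (v : N → ι → ℂ) : Prop :=
  ∀ i j, vinner (v i) (v j) = if i = j then 1 else 0

/-- The S(k)-norm of `X ∈ M_ι ⊗ M_κ`. -/
noncomputable def SkNorm (k : ℕ) (X : Matrix (ι × κ) (ι × κ) ℂ) : ℝ :=
  sSup { r | ∃ v w : ι × κ → ℂ, vinner v v = 1 ∧ vinner w w = 1 ∧
    SchmidtRankLE k v ∧ SchmidtRankLE k w ∧
    r = ‖vinner v (X.mulVec w)‖ }

/-- The product numerical radius r_k^⊗. -/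
noncomputable def prodRad (k : ℕ) (Y : Matrix (ι × κ) (ι × κ) ℂ) : ℝ :=
  sSup { r | ∃ v : ι × κ → ℂ, vinner v v = 1 ∧ SchmidtRankLE k v ∧
    r = ‖vinner v (Y.mulVec v)‖ }

/-- The norm ‖·‖_{γ,k}. -/
noncomputable def gammaNorm (k : ℕ) (X : Matrix (ι × κ) (ι × κ) ℂ) : ℝ :=
  sInf { r | ∃ (N : ℕ) (c : Fin N → ℂ) (v w : Fin N → (ι × κ → ℂ)),
    (∀ i, vinner (v i) (v i) = 1 ∧ vinner (w i) (w i) = 1 ∧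
      SchmidtRankLE k (v i) ∧ SchmidtRankLE k (w i)) ∧
    X = ∑ i, c i • ketBra (v i) (w i) ∧
    r = ∑ i, ‖c i‖ }

/-- `ρ` is a density matrix. -/
def IsDensity (ρ : Matrix ι ι ℂ) : Prop := ρ.PosSemidef ∧ ρ.trace = 1

/-- `ρ` has Schmidt number at most `k`: it is a convex combination of projections onto
unit vectors of Schmidt rank at most `k`. -/
def SchmidtNumLE (k : ℕ) (ρ : Matrix (ι × κ) (ι × κ) ℂ) : Prop :=
  ∃ (N : ℕ) (p : Fin N → ℝ) (v : Fin N → (ι × κ → ℂ)),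
    (∀ i, 0 ≤ p i ∧ vinner (v i) (v i) = 1 ∧ SchmidtRankLE k (v i)) ∧
    (∑ i, p i) = 1 ∧ ρ = ∑ i, p i • ketBra (v i) (v i)

/-- The robustness norm R_k on Hermitian operators. -/
noncomputable def Rk (k : ℕ) (Y : Matrix (ι × κ) (ι × κ) ℂ) : ℝ :=
  sInf { r | ∃ (c₁ c₂ : ℝ) (ρ₁ ρ₂ : Matrix (ι × κ) (ι × κ) ℂ),
    0 ≤ c₁ ∧ 0 ≤ c₂ ∧ IsDensity ρ₁ ∧ IsDensity ρ₂ ∧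
    SchmidtNumLE k ρ₁ ∧ SchmidtNumLE k ρ₂ ∧
    Y = c₁ • ρ₁ - c₂ • ρ₂ ∧ r = c₁ + c₂ }

/-- `Y` is k-block positive: ⟨v|Y|v⟩ ≥ 0 for every unit vector of Schmidt rank at most `k`. -/
def KBlockPos (k : ℕ) (Y : Matrix (ι × κ) (ι × κ) ℂ) : Prop :=
  ∀ v : ι × κ → ℂ, vinner v v = 1 → SchmidtRankLE k v →
    0 ≤ (vinner v (Y.mulVec v)).re

/-- Dual of a norm on matrices, w.r.t. the Hilbert–Schmidt inner product ⟨W,X⟩ = Tr(Wᴴ X). -/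
noncomputable def dualNormM (f : Matrix ι κ ℂ → ℝ) (X : Matrix ι κ ℂ) : ℝ :=
  sSup { r | ∃ W : Matrix ι κ ℂ, f W ≤ 1 ∧ r = ‖(Wᴴ * X).trace‖ }

/-- Dual of a norm, computed in the real Hilbert space of Hermitian matrices with the
Hilbert–Schmidt inner product ⟨W,Y⟩ = Tr(WY). -/
noncomputable def dualNormHerm (f : Matrix ι ι ℂ → ℝ) (Y : Matrix ι ι ℂ) : ℝ :=
  sSup { r | ∃ W : Matrix ι ι ℂ, W.IsHermitian ∧ f W ≤ 1 ∧ r = |((W * Y).trace).re| }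

/-- The Frobenius norm of a matrix. -/
noncomputable def frobNorm (X : Matrix ι κ ℂ) : ℝ :=
  Real.sqrt (∑ i, ∑ j, Complex.normSq (X i j))

/-- The (k,2)-norm: ‖X‖_{(k,2)} = sup { |Tr(XY)| : rank Y ≤ k, ‖Y‖_F ≤ 1 }. -/
noncomputable def kNorm (k : ℕ) (X : Matrix ι κ ℂ) : ℝ :=
  sSup { r | ∃ Y : Matrix κ ι ℂ, Y.rank ≤ k ∧ frobNorm Y ≤ 1 ∧
    r = ‖(X * Y).trace‖ }

/-- The trace norm: the sum of the singular values, i.e. of the square roots of the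
eigenvalues of Xᴴ X. -/
noncomputable def traceNorm [DecidableEq κ] (X : Matrix ι κ ℂ) : ℝ :=
  ∑ i, Real.sqrt ((Matrix.isHermitian_conjTranspose_mul_self X).eigenvalues i)

/-- The s(k) vector norm: sup of |⟨u,w⟩| over unit vectors u of Schmidt rank at most k. -/
noncomputable def skVecNorm (k : ℕ) (w : ι × κ → ℂ) : ℝ :=
  sSup { r | ∃ u : ι × κ → ℂ, vinner u u = 1 ∧ SchmidtRankLE k u ∧
    r = ‖vinner u w‖ }

/-- Dual of a norm on vectors. -/
noncomputable def dualNormV (f : (ι × κ → ℂ) → ℝ) (v : ι × κ → ℂ) : ℝ :=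
  sSup { r | ∃ w : ι × κ → ℂ, f w ≤ 1 ∧ r = ‖vinner w v‖ }

/-- The realignment map, L(X)_{(i,k),(j,l)} = X_{(i,j),(k,l)}. -/
def realign {m n : ℕ} (X : Matrix (Fin m × Fin n) (Fin m × Fin n) ℂ) :
    Matrix (Fin m × Fin m) (Fin n × Fin n) ℂ :=
  fun p q => X (p.1, q.1) (p.2, q.2)

/-- The projective tensor norm on M_{m,n} ⊗ M_{m,n}. -/
noncomputable def projNorm {m n : ℕ} (Z : Matrix (Fin m × Fin m) (Fin n × Fin n) ℂ) : ℝ :=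
  sInf { r | ∃ (N : ℕ) (A B : Fin N → Matrix (Fin m) (Fin n) ℂ),
    Z = ∑ i, A i ⊗ₖ B i ∧ r = ∑ i, traceNorm (A i) * traceNorm (B i) }

/-!
Realignment sends `|a ⊗ b⟩⟨c ⊗ d|` to `|a⟩⟨b̄| ⊗ |c̄⟩⟨d|`, and the trace norm of a rank-one matrix
is the product of the lengths of its two vectors. Hence a decomposition of `X` into product
vectors is carried to a decomposition of `L(X)` into tensor products of rank-one matrices of the
same cost. Conversely, the singular value decomposition splits each tensor factor into rank-one
matrices without changing the total trace norm, so the cost of any decomposition of `L(X)` is also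
the cost of one of `X`. The two infima are therefore taken over the same set of real numbers.
-/

open WithLp (toLp)

section Vectors

theorem vinner_self_eq_norm_sq (v : ι → ℂ) : vinner v v = (‖toLp 2 v‖ : ℂ) ^ 2 := by
  rw [← Complex.ofReal_pow, EuclideanSpace.norm_sq_eq]
  simp [vinner, dotProduct, Complex.conj_mul']

theorem vinner_self_eq_one_iff {v : ι → ℂ} : vinner v v = 1 ↔ ‖toLp 2 v‖ = 1 := by
  rw [vinner_self_eq_norm_sq]
  norm_cast
  exact pow_eq_one_iff_of_nonneg (norm_nonneg _) two_ne_zero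

theorem norm_toLp_star (v : ι → ℂ) : ‖toLp 2 (star v)‖ = ‖toLp 2 v‖ := by
  simp [EuclideanSpace.norm_eq]

theorem norm_toLp_prodVec (a : ι → ℂ) (b : κ → ℂ) :
    ‖toLp 2 (prodVec a b)‖ = ‖toLp 2 a‖ * ‖toLp 2 b‖ := by
  rw [← sq_eq_sq₀ (by positivity) (by positivity), mul_pow]
  simp only [EuclideanSpace.norm_sq_eq, Finset.sum_mul_sum, Fintype.sum_prod_type, prodVec,
    norm_mul, mul_pow]

/-- The unit vector in the direction of `v`, with the junk value `0` at `v = 0`. -/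
noncomputable def unitVec (v : ι → ℂ) : ι → ℂ := (‖toLp 2 v‖⁻¹ : ℂ) • v

theorem norm_toLp_unitVec {v : ι → ℂ} (hv : v ≠ 0) : ‖toLp 2 (unitVec v)‖ = 1 := by
  rw [unitVec, WithLp.toLp_smul, norm_smul, norm_inv, Complex.norm_real, norm_norm,
    inv_mul_cancel₀ (by simpa using hv)]

theorem norm_smul_unitVec (v : ι → ℂ) : (‖toLp 2 v‖ : ℂ) • unitVec v = v := by
  rcases eq_or_ne v 0 with rfl | hv
  · simp [unitVec]
  · have norm_ne_zero : (‖toLp 2 v‖ : ℂ) ≠ 0 := by simpa using hv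
    rw [unitVec, smul_inv_smul₀ norm_ne_zero]

variable {α β : Type*}

theorem smul_prodVec (c : ℂ) (a : α → ℂ) (b : β → ℂ) :
    c • prodVec a b = prodVec (c • a) b := by
  ext p
  simp [prodVec, mul_assoc]

theorem schmidtRankLE_one_iff {v : α × β → ℂ} :
    SchmidtRankLE 1 v ↔ ∃ a b, v = prodVec a b := by
  constructor
  · rintro ⟨a, b, rfl⟩
    exact ⟨a 0, b 0, by simp⟩
  · rintro ⟨a, b, rfl⟩
    exact ⟨fun _ => a, fun _ => b, by simp⟩

theorem schmidtRankLE_one_prodVec (a : α → ℂ) (b : β → ℂ) : SchmidtRankLE 1 (prodVec a b) :=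
  schmidtRankLE_one_iff.2 ⟨a, b, rfl⟩

theorem SchmidtRankLE.smul {k : ℕ} {v : α × β → ℂ} (hv : SchmidtRankLE k v) (c : ℂ) :
    SchmidtRankLE k (c • v) := by
  obtain ⟨a, b, rfl⟩ := hv
  exact ⟨fun i => c • a i, b, by simp only [Finset.smul_sum, smul_prodVec]⟩

theorem ketBra_smul_smul (c d : ℂ) (v : α → ℂ) (w : β → ℂ) :
    ketBra (c • v) (d • w) = (c * star d) • ketBra v w := by
  ext p q
  simp only [ketBra, vecMulVec_apply, Pi.smul_apply, Pi.star_apply, Matrix.smul_apply,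
    smul_eq_mul, star_mul']
  ring

theorem norm_mul_norm_smul_ketBra_unitVec (v : ι → ℂ) (w : κ → ℂ) :
    ((‖toLp 2 v‖ * ‖toLp 2 w‖ : ℝ) : ℂ) • ketBra (unitVec v) (unitVec w) = ketBra v w := by
  conv_rhs => rw [← norm_smul_unitVec v, ← norm_smul_unitVec w, ketBra_smul_smul]
  simp

theorem ketBra_zero_left (w : β → ℂ) : ketBra (0 : α → ℂ) w = 0 :=
  zero_vecMulVec _

theorem ketBra_zero_right (v : α → ℂ) : ketBra v (0 : β → ℂ) = 0 := by
  ext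
  simp [ketBra, vecMulVec_apply]

end Vectors

section TraceNorm

theorem sum_comp_eq_comp_sum_of_support_subsingleton {I M N : Type*} [Fintype I]
    [AddCommMonoid M] [AddCommMonoid N] {f : I → M} (hf : f.support.Subsingleton)
    {g : M → N} (hg : g 0 = 0) : ∑ i, g (f i) = g (∑ i, f i) := by
  by_cases h : ∃ j, f j ≠ 0
  · obtain ⟨j, hj⟩ := h
    have f_eq_zero : ∀ i, i ≠ j → f i = 0 := fun i hij => by
      by_contra hi
      exact hij (hf hi hj)
    rw [Fintype.sum_eq_single j f_eq_zero,
      Fintype.sum_eq_single j fun i hij => by rw [f_eq_zero i hij, hg]]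
  · push Not at h
    simp [h, hg]

theorem frobNorm_vecMulVec (a : ι → ℂ) (b : κ → ℂ) :
    frobNorm (vecMulVec a b) = ‖toLp 2 a‖ * ‖toLp 2 b‖ := by
  rw [← norm_toLp_prodVec, frobNorm, EuclideanSpace.norm_eq, Fintype.sum_prod_type]
  simp only [Complex.normSq_eq_norm_sq, vecMulVec_apply, prodVec]

theorem trace_conjTranspose_mul_self_eq (A : Matrix ι κ ℂ) :
    (Aᴴ * A).trace = ((∑ i, ∑ j, Complex.normSq (A i j) : ℝ) : ℂ) := by
  rw [Finset.sum_comm]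
  simp [Matrix.trace, Matrix.mul_apply, Complex.normSq_eq_conj_mul_self]

variable [DecidableEq κ]

theorem traceNorm_eq_frobNorm_of_rank_le_one {A : Matrix ι κ ℂ} (hA : A.rank ≤ 1) :
    traceNorm A = frobNorm A := by
  have hAA := isHermitian_conjTranspose_mul_self A
  have sum_eigenvalues : ∑ j, hAA.eigenvalues j = ∑ i, ∑ j, Complex.normSq (A i j) := by
    apply Complex.ofReal_injective
    rw [← trace_conjTranspose_mul_self_eq, hAA.trace_eq_sum_eigenvalues, Complex.ofReal_sum]
    rfl
  have support_subsingleton : (Function.support hAA.eigenvalues).Subsingleton := by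
    rw [← rank_conjTranspose_mul_self, hAA.rank_eq_card_non_zero_eigs,
      Fintype.card_le_one_iff_subsingleton] at hA
    exact Set.subsingleton_coe _ |>.1 hA
  rw [frobNorm, ← sum_eigenvalues]
  exact sum_comp_eq_comp_sum_of_support_subsingleton support_subsingleton Real.sqrt_zero

theorem traceNorm_vecMulVec (a : ι → ℂ) (b : κ → ℂ) :
    traceNorm (vecMulVec a b) = ‖toLp 2 a‖ * ‖toLp 2 b‖ := by
  rw [traceNorm_eq_frobNorm_of_rank_le_one (rank_vecMulVec_le a b), frobNorm_vecMulVec]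

theorem sum_vecMulVec_star_eigenvectorBasis {H : Matrix κ κ ℂ} (hH : H.IsHermitian) :
    ∑ j, vecMulVec ⇑(hH.eigenvectorBasis j) (star ⇑(hH.eigenvectorBasis j)) = 1 := by
  rw [← Unitary.coe_mul_star_self hH.eigenvectorUnitary]
  ext p q
  simp [Matrix.sum_apply, vecMulVec_apply, Matrix.mul_apply]

theorem norm_toLp_mulVec_eigenvectorBasis (A : Matrix ι κ ℂ) (j : κ) :
    ‖toLp 2 (A *ᵥ ⇑((isHermitian_conjTranspose_mul_self A).eigenvectorBasis j))‖ =
      √((isHermitian_conjTranspose_mul_self A).eigenvalues j) := by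
  set hAA := isHermitian_conjTranspose_mul_self A
  have eigenvalue_eq : hAA.eigenvalues j = ‖toLp 2 (A *ᵥ ⇑(hAA.eigenvectorBasis j))‖ ^ 2 := by
    rw [hAA.eigenvalues_eq, ← mulVec_mulVec, dotProduct_mulVec, ← star_mulVec, ← vinner,
      vinner_self_eq_norm_sq, ← Complex.ofReal_pow]
    exact Complex.ofReal_re _
  rw [eigenvalue_eq, Real.sqrt_sq (norm_nonneg _)]

theorem exists_sum_vecMulVec_eq_and_traceNorm_eq (A : Matrix ι κ ℂ) :
    ∃ (a : κ → ι → ℂ) (b : κ → κ → ℂ),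
      A = ∑ j, vecMulVec (a j) (b j) ∧ traceNorm A = ∑ j, ‖toLp 2 (a j)‖ * ‖toLp 2 (b j)‖ := by
  set e := (isHermitian_conjTranspose_mul_self A).eigenvectorBasis
  refine ⟨fun j => A *ᵥ e j, fun j => star ⇑(e j), ?_, ?_⟩
  · calc A = A * ∑ j, vecMulVec ⇑(e j) (star ⇑(e j)) := by
          rw [sum_vecMulVec_star_eigenvectorBasis, Matrix.mul_one]
      _ = ∑ j, vecMulVec (A *ᵥ e j) (star ⇑(e j)) := by
          simp only [Matrix.mul_sum, mul_vecMulVec]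
  · refine Finset.sum_congr rfl fun j _ => ?_
    rw [norm_toLp_mulVec_eigenvectorBasis, norm_toLp_star, WithLp.toLp_ofLp, e.norm_eq_one,
      mul_one]

end TraceNorm

section Realign

theorem sum_kronecker_sum {I J α β γ δ R : Type*} [NonUnitalNonAssocSemiring R] (s : Finset I)
    (t : Finset J) (A : I → Matrix α β R) (B : J → Matrix γ δ R) :
    (∑ i ∈ s, A i) ⊗ₖ (∑ j ∈ t, B j) = ∑ i ∈ s, ∑ j ∈ t, A i ⊗ₖ B j := by
  ext p q
  simp only [kroneckerMap_apply, Matrix.sum_apply, Finset.sum_mul_sum]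

variable {m n : ℕ}

theorem realign_injective : Function.Injective (realign (m := m) (n := n)) := fun _ _ h =>
  Matrix.ext fun p q => congrFun₂ h (p.1, q.1) (p.2, q.2)

theorem realign_sum {I : Type*} (s : Finset I)
    (X : I → Matrix (Fin m × Fin n) (Fin m × Fin n) ℂ) :
    realign (∑ i ∈ s, X i) = ∑ i ∈ s, realign (X i) := by
  ext p q
  simp only [realign, Matrix.sum_apply]

theorem realign_ketBra_prodVec (a c : Fin m → ℂ) (b d : Fin n → ℂ) :
    realign (ketBra (prodVec a b) (prodVec c d)) =
      vecMulVec a b ⊗ₖ vecMulVec (star c) (star d) := by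
  ext p q
  simp [realign, ketBra, prodVec, vecMulVec_apply]

end Realign

section Costs

/-- The costs of the decompositions of `X` over unit vectors of Schmidt rank at most `k`;
`gammaNorm k X` is their infimum. -/
def gammaCosts (k : ℕ) (X : Matrix (ι × κ) (ι × κ) ℂ) : Set ℝ :=
  { r | ∃ (N : ℕ) (c : Fin N → ℂ) (v w : Fin N → (ι × κ → ℂ)),
    (∀ i, vinner (v i) (v i) = 1 ∧ vinner (w i) (w i) = 1 ∧
      SchmidtRankLE k (v i) ∧ SchmidtRankLE k (w i)) ∧
    X = ∑ i, c i • ketBra (v i) (w i) ∧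
    r = ∑ i, ‖c i‖ }

/-- The costs of the decompositions of `Z` into tensor products of matrices; `projNorm Z` is their
infimum. -/
def projCosts {m n : ℕ} (Z : Matrix (Fin m × Fin m) (Fin n × Fin n) ℂ) : Set ℝ :=
  { r | ∃ (N : ℕ) (A B : Fin N → Matrix (Fin m) (Fin n) ℂ),
    Z = ∑ i, A i ⊗ₖ B i ∧ r = ∑ i, traceNorm (A i) * traceNorm (B i) }

theorem sum_norm_mem_gammaCosts {I : Type*} [Fintype I] {k : ℕ} (c : I → ℂ)
    {v w : I → ι × κ → ℂ} (hv_norm : ∀ i, ‖toLp 2 (v i)‖ = 1) (hw_norm : ∀ i, ‖toLp 2 (w i)‖ = 1)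
    (hv : ∀ i, SchmidtRankLE k (v i)) (hw : ∀ i, SchmidtRankLE k (w i)) :
    ∑ i, ‖c i‖ ∈ gammaCosts k (∑ i, c i • ketBra (v i) (w i)) := by
  let e := (Fintype.equivFin I).symm
  exact ⟨Fintype.card I, c ∘ e, v ∘ e, w ∘ e,
    fun i => ⟨vinner_self_eq_one_iff.2 (hv_norm _), vinner_self_eq_one_iff.2 (hw_norm _),
      hv _, hw _⟩,
    (e.sum_comp fun i => c i • ketBra (v i) (w i)).symm, (e.sum_comp fun i => ‖c i‖).symm⟩

theorem sum_norm_mul_norm_mem_gammaCosts {I : Type*} [Fintype I] {k : ℕ}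
    {v w : I → ι × κ → ℂ} (hv : ∀ i, SchmidtRankLE k (v i)) (hw : ∀ i, SchmidtRankLE k (w i)) :
    ∑ i, ‖toLp 2 (v i)‖ * ‖toLp 2 (w i)‖ ∈ gammaCosts k (∑ i, ketBra (v i) (w i)) := by
  classical
  -- Unit vectors need not exist, so the vanishing terms have to be dropped before normalizing.
  let S := {i // v i ≠ 0 ∧ w i ≠ 0}
  have vanishing (i : I) (hi : i ∉ Set.range (Subtype.val : S → I)) : v i = 0 ∨ w i = 0 := by
    by_contra! h
    exact hi ⟨⟨i, h⟩, rfl⟩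
  have sum_ketBra : ∑ s : S, ((‖toLp 2 (v s)‖ * ‖toLp 2 (w s)‖ : ℝ) : ℂ) •
      ketBra (unitVec (v s)) (unitVec (w s)) = ∑ i, ketBra (v i) (w i) := by
    simp only [norm_mul_norm_smul_ketBra_unitVec]
    refine Fintype.sum_of_injective _ Subtype.val_injective _ _ (fun i hi => ?_) fun _ => rfl
    rcases vanishing i hi with h | h
    · rw [h, ketBra_zero_left]
    · rw [h, ketBra_zero_right]
  have sum_cost : ∑ s : S, ‖((‖toLp 2 (v s)‖ * ‖toLp 2 (w s)‖ : ℝ) : ℂ)‖ =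
      ∑ i, ‖toLp 2 (v i)‖ * ‖toLp 2 (w i)‖ := by
    refine Fintype.sum_of_injective _ Subtype.val_injective _
      (fun i => ‖toLp 2 (v i)‖ * ‖toLp 2 (w i)‖) (fun i hi => ?_) fun s => by simp
    rcases vanishing i hi with h | h <;> simp [h]
  rw [← sum_ketBra, ← sum_cost]
  exact sum_norm_mem_gammaCosts _ (fun s => norm_toLp_unitVec s.2.1)
    (fun s => norm_toLp_unitVec s.2.2) (fun s => (hv s).smul _) (fun s => (hw s).smul _)

variable {m n : ℕ} (X : Matrix (Fin m × Fin n) (Fin m × Fin n) ℂ)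

theorem gammaCosts_one_subset_projCosts_realign : gammaCosts 1 X ⊆ projCosts (realign X) := by
  rintro r ⟨N, c, v, w, hvw, rfl, rfl⟩
  choose a b hv using fun i => schmidtRankLE_one_iff.1 (hvw i).2.2.1
  choose a' b' hw using fun i => schmidtRankLE_one_iff.1 (hvw i).2.2.2
  refine ⟨N, fun i => vecMulVec (c i • a i) (b i),
    fun i => vecMulVec (star (a' i)) (star (b' i)), ?_, ?_⟩
  · rw [realign_sum]
    refine Finset.sum_congr rfl fun i _ => ?_
    rw [← realign_ketBra_prodVec, ← smul_prodVec, ← hv, ← hw, ketBra, ketBra, smul_vecMulVec]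
  · refine Finset.sum_congr rfl fun i _ => ?_
    have norm_v : ‖toLp 2 (a i)‖ * ‖toLp 2 (b i)‖ = 1 := by
      rw [← norm_toLp_prodVec, ← hv, ← vinner_self_eq_one_iff]
      exact (hvw i).1
    have norm_w : ‖toLp 2 (a' i)‖ * ‖toLp 2 (b' i)‖ = 1 := by
      rw [← norm_toLp_prodVec, ← hw, ← vinner_self_eq_one_iff]
      exact (hvw i).2.1
    rw [traceNorm_vecMulVec, traceNorm_vecMulVec, norm_toLp_star, norm_toLp_star, norm_w,
      mul_one, WithLp.toLp_smul, norm_smul, mul_assoc, norm_v, mul_one]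

theorem projCosts_realign_subset_gammaCosts_one : projCosts (realign X) ⊆ gammaCosts 1 X := by
  rintro r ⟨N, A, B, hX, rfl⟩
  choose a b hA hA_norm using fun i => exists_sum_vecMulVec_eq_and_traceNorm_eq (A i)
  choose c d hB hB_norm using fun i => exists_sum_vecMulVec_eq_and_traceNorm_eq (B i)
  let v (t : Fin N × Fin n × Fin n) := prodVec (a t.1 t.2.1) (b t.1 t.2.1)
  let w (t : Fin N × Fin n × Fin n) := prodVec (star (c t.1 t.2.2)) (star (d t.1 t.2.2))
  have X_eq : X = ∑ t, ketBra (v t) (w t) := realign_injective <| by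
    simp only [hX, realign_sum, v, w, realign_ketBra_prodVec, star_star, Fintype.sum_prod_type,
      ← sum_kronecker_sum, ← hA, ← hB]
  have cost_eq : ∑ i, traceNorm (A i) * traceNorm (B i) =
      ∑ t, ‖toLp 2 (v t)‖ * ‖toLp 2 (w t)‖ := by
    simp only [v, w, hA_norm, hB_norm, norm_toLp_prodVec, norm_toLp_star, Finset.sum_mul_sum,
      Fintype.sum_prod_type]
  rw [X_eq, cost_eq]
  exact sum_norm_mul_norm_mem_gammaCosts (fun _ => schmidtRankLE_one_prodVec _ _)
    (fun _ => schmidtRankLE_one_prodVec _ _)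

end Costs

/-- the realignment map preserves the projective tensor norm:
‖L(X)‖_γ = ‖X‖_{γ,1}. -/
theorem projNorm_realign {m n : ℕ} (X : Matrix (Fin m × Fin n) (Fin m × Fin n) ℂ) :
    projNorm (realign X) = gammaNorm 1 X := by
  have costs_eq : projCosts (realign X) = gammaCosts 1 X :=
    (projCosts_realign_subset_gammaCosts_one X).antisymm (gammaCosts_one_subset_projCosts_realign X)
  exact congrArg sInf costs_eq

end Ent
end

section
/- Let ρ ∈ M_m ⊗ M_n be a density matrix and fix 1 ≤ k ≤ min(m,n). If SN(ρ) ≤ k, then ‖L(ρ)‖_{(k²,2)}° ≤ 1, where ‖·‖_{(k²,2)}° is the dual of the (k²,2)-norm on the m² × n² matrix L(ρ). -/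
open scoped Kronecker ComplexOrder
open Matrix

namespace Ent

variable {ι κ : Type*} [Fintype ι] [Fintype κ]

/-!
If `A` is the `m × n` coefficient matrix of a vector `v`, then `L(|v⟩⟨v|) = A ⊗ conj A`. The Schmidt
rank of `v` is `rank A` and its norm is `‖A‖_F`; rank and Frobenius norm are multiplicative under
`⊗`, so `L` sends the projection onto a unit vector of Schmidt rank at most `k` to a matrix of rank
at most `k²` and Frobenius norm `1`. The `(k²,2)`-norm is the supremum of the pairings against
exactly such matrices, hence its dual norm is at most `1` on their convex hull, which contains
`L(ρ)`.
-/

section Rank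

variable {K l m n p : Type*} [Field K] [Fintype n] [Fintype p]

lemma exists_eq_mul_fin_rank [Finite m] (A : Matrix m n K) :
    ∃ (B : Matrix m (Fin A.rank) K) (C : Matrix (Fin A.rank) n K), A = B * C := by
  classical
  let b : Module.Basis (Fin A.rank) K (LinearMap.range A.mulVecLin) := Module.finBasis K _
  let column (j : n) : LinearMap.range A.mulVecLin :=
    ⟨A.col j, Pi.single j 1, A.mulVec_single_one j⟩
  refine ⟨.of fun i s ↦ (b s : m → K) i, .of fun s j ↦ b.repr (column j) s, ?_⟩
  ext i j
  have column_eq : ∑ s, b.repr (column j) s • (b s : m → K) = A.col j := by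
    have := congrArg Subtype.val (b.sum_repr (column j))
    rwa [Submodule.coe_sum] at this
  simpa [Matrix.mul_apply, mul_comm] using (congrFun column_eq i).symm

lemma rank_kronecker_le [Finite l] [Finite m] (A : Matrix l n K) (B : Matrix m p K) :
    (A ⊗ₖ B).rank ≤ A.rank * B.rank := by
  obtain ⟨A₁, A₂, hA⟩ := exists_eq_mul_fin_rank A
  obtain ⟨B₁, B₂, hB⟩ := exists_eq_mul_fin_rank B
  calc (A ⊗ₖ B).rank
      = ((A₁ ⊗ₖ B₁) * (A₂ ⊗ₖ B₂)).rank := by rw [← Matrix.mul_kronecker_mul, ← hA, ← hB]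
    _ ≤ (A₁ ⊗ₖ B₁).rank := Matrix.rank_mul_le_left _ _
    _ ≤ Fintype.card (Fin A.rank × Fin B.rank) := Matrix.rank_le_card_width _
    _ = A.rank * B.rank := by simp

end Rank

section FrobeniusNorm

lemma frobNorm_conjTranspose (A : Matrix ι κ ℂ) : frobNorm Aᴴ = frobNorm A := by
  rw [frobNorm, Finset.sum_comm]
  simp [frobNorm]

lemma frobNorm_map_star (A : Matrix ι κ ℂ) : frobNorm (A.map star) = frobNorm A := by
  simp [frobNorm]

lemma frobNorm_kronecker {ι' κ' : Type*} [Fintype ι'] [Fintype κ']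
    (A : Matrix ι κ ℂ) (B : Matrix ι' κ' ℂ) :
    frobNorm (A ⊗ₖ B) = frobNorm A * frobNorm B := by
  have sum_nonneg : 0 ≤ ∑ i, ∑ j, Complex.normSq (A i j) :=
    Finset.sum_nonneg fun _ _ ↦ Finset.sum_nonneg fun _ _ ↦ Complex.normSq_nonneg _
  simp only [frobNorm, ← Real.sqrt_mul sum_nonneg, Matrix.kronecker_apply, Complex.normSq_mul,
    Fintype.sum_prod_type, Finset.sum_mul_sum]

lemma norm_trace_mul_le_frobNorm_mul_frobNorm (W : Matrix ι κ ℂ) (Y : Matrix κ ι ℂ) :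
    ‖(W * Y).trace‖ ≤ frobNorm W * frobNorm Y := by
  calc ‖(W * Y).trace‖
      = ‖∑ p : ι × κ, W p.1 p.2 * Y p.2 p.1‖ := by
        simp only [Matrix.trace, Matrix.diag_apply, Matrix.mul_apply, Fintype.sum_prod_type]
    _ ≤ ∑ p : ι × κ, ‖W p.1 p.2‖ * ‖Y p.2 p.1‖ :=
        norm_sum_le_of_le _ fun _ _ ↦ norm_mul_le _ _
    _ ≤ √(∑ p : ι × κ, ‖W p.1 p.2‖ ^ 2) * √(∑ p : ι × κ, ‖Y p.2 p.1‖ ^ 2) :=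
        Real.sum_mul_le_sqrt_mul_sqrt _ _ _
    _ = frobNorm W * frobNorm Y := by
        simp only [frobNorm, Complex.normSq_eq_norm_sq, Fintype.sum_prod_type]
        rw [Finset.sum_comm (f := fun i j ↦ ‖Y j i‖ ^ 2)]

end FrobeniusNorm

section DualNorm

/-- The matrices of rank at most `k` in the Frobenius unit ball. The `(k,2)`-norm is the supremum
of the trace pairings against them. -/
def lowRankBall (ι κ : Type*) [Fintype ι] [Fintype κ] (k : ℕ) : Set (Matrix ι κ ℂ) :=
  {X | X.rank ≤ k ∧ frobNorm X ≤ 1}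

variable {k : ℕ}

lemma conjTranspose_mem_lowRankBall {X : Matrix ι κ ℂ} (hX : X ∈ lowRankBall ι κ k) :
    Xᴴ ∈ lowRankBall κ ι k :=
  ⟨X.rank_conjTranspose.trans_le hX.1, (frobNorm_conjTranspose X).trans_le hX.2⟩

lemma norm_trace_mul_le_kNorm (W : Matrix ι κ ℂ) {Y : Matrix κ ι ℂ}
    (hY : Y ∈ lowRankBall κ ι k) : ‖(W * Y).trace‖ ≤ kNorm k W := by
  refine le_csSup ⟨frobNorm W, ?_⟩ ⟨Y, hY.1, hY.2, rfl⟩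
  rintro _ ⟨Z, -, hZ, rfl⟩
  exact (norm_trace_mul_le_frobNorm_mul_frobNorm W Z).trans
    (mul_le_of_le_one_right (Real.sqrt_nonneg _) hZ)

lemma norm_trace_conjTranspose_mul_comm (W X : Matrix ι κ ℂ) :
    ‖(Wᴴ * X).trace‖ = ‖(W * Xᴴ).trace‖ := by
  rw [← norm_star, ← Matrix.trace_conjTranspose, Matrix.conjTranspose_mul,
    Matrix.conjTranspose_conjTranspose, Matrix.trace_mul_comm]

lemma convex_setOf_norm_trace_mul_le (W : Matrix κ ι ℂ) (r : ℝ) :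
    Convex ℝ {X : Matrix ι κ ℂ | ‖(W * X).trace‖ ≤ r} := by
  have isLinearMap : IsLinearMap ℝ fun X : Matrix ι κ ℂ ↦ (W * X).trace :=
    ⟨fun X Y ↦ by rw [Matrix.mul_add, Matrix.trace_add],
      fun c X ↦ by rw [Matrix.mul_smul, Matrix.trace_smul]⟩
  simpa [Set.preimage] using (convex_closedBall (0 : ℂ) r).is_linear_preimage isLinearMap

lemma dualNormM_kNorm_le_one_of_mem_convexHull {X : Matrix ι κ ℂ}
    (hX : X ∈ convexHull ℝ (lowRankBall ι κ k)) : dualNormM (kNorm k) X ≤ 1 := by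
  refine Real.sSup_le ?_ zero_le_one
  rintro _ ⟨W, hW, rfl⟩
  refine convexHull_min (fun Y hY ↦ ?_) (convex_setOf_norm_trace_mul_le Wᴴ 1) hX
  calc ‖(Wᴴ * Y).trace‖
      = ‖(W * Yᴴ).trace‖ := norm_trace_conjTranspose_mul_comm W Y
    _ ≤ kNorm k W := norm_trace_mul_le_kNorm W (conjTranspose_mem_lowRankBall hY)
    _ ≤ 1 := hW

end DualNorm

section Realignment

/-- The coefficient matrix of a bipartite vector, under the identification of `ℂ^ι ⊗ ℂ^κ` with
`ι × κ` matrices that sends `a ⊗ b` to `a bᵀ`. -/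
def coeffMatrix {ι κ : Type*} (v : ι × κ → ℂ) : Matrix ι κ ℂ :=
  Matrix.of (Function.curry v)

lemma rank_coeffMatrix_le {ι κ : Type*} [Fintype κ] {k : ℕ} {v : ι × κ → ℂ}
    (hv : SchmidtRankLE k v) : (coeffMatrix v).rank ≤ k := by
  obtain ⟨a, b, rfl⟩ := hv
  have eq_mul : coeffMatrix (∑ i, prodVec (a i) (b i)) = (Matrix.of a)ᵀ * Matrix.of b := by
    ext x y
    simp [coeffMatrix, prodVec, Matrix.mul_apply]
  calc (coeffMatrix (∑ i, prodVec (a i) (b i))).rank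
      ≤ (Matrix.of a)ᵀ.rank := eq_mul ▸ Matrix.rank_mul_le_left _ _
    _ ≤ k := Matrix.rank_le_card_width _ |>.trans_eq (Fintype.card_fin k)

lemma frobNorm_coeffMatrix (v : ι × κ → ℂ) :
    frobNorm (coeffMatrix v) = √(vinner v v).re := by
  simp [frobNorm, coeffMatrix, vinner, dotProduct, Fintype.sum_prod_type, Complex.normSq_apply]

variable {m n k : ℕ}

lemma realign_ketBra (v w : Fin m × Fin n → ℂ) :
    realign (ketBra v w) = coeffMatrix v ⊗ₖ (coeffMatrix w).map star :=
  rfl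

lemma realign_sum_smul {R N : Type*} [SMul R ℂ] [Fintype N] (c : N → R)
    (X : N → Matrix (Fin m × Fin n) (Fin m × Fin n) ℂ) :
    realign (∑ i, c i • X i) = ∑ i, c i • realign (X i) := by
  ext p q
  simp [realign, Matrix.sum_apply]

lemma realign_ketBra_mem_lowRankBall {l : ℕ} {v w : Fin m × Fin n → ℂ}
    (hv : vinner v v = 1) (hw : vinner w w = 1)
    (hvk : SchmidtRankLE k v) (hwl : SchmidtRankLE l w) :
    realign (ketBra v w) ∈ lowRankBall (Fin m × Fin m) (Fin n × Fin n) (k * l) := by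
  rw [realign_ketBra]
  constructor
  · have rank_map_star : ((coeffMatrix w).map star).rank = (coeffMatrix w).rank :=
      (Matrix.rank_transpose (coeffMatrix w)ᴴ).trans (Matrix.rank_conjTranspose _)
    calc (coeffMatrix v ⊗ₖ (coeffMatrix w).map star).rank
        ≤ (coeffMatrix v).rank * ((coeffMatrix w).map star).rank := rank_kronecker_le _ _
      _ ≤ k * l :=
        Nat.mul_le_mul (rank_coeffMatrix_le hvk) (rank_map_star.trans_le (rank_coeffMatrix_le hwl))
  · rw [frobNorm_kronecker, frobNorm_map_star, frobNorm_coeffMatrix, frobNorm_coeffMatrix, hv, hw]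
    simp

lemma realign_mem_convexHull_lowRankBall {ρ : Matrix (Fin m × Fin n) (Fin m × Fin n) ℂ}
    (hρ : SchmidtNumLE k ρ) :
    realign ρ ∈ convexHull ℝ (lowRankBall (Fin m × Fin m) (Fin n × Fin n) (k ^ 2)) := by
  obtain ⟨N, p, v, hv, hp, rfl⟩ := hρ
  rw [realign_sum_smul, sq]
  refine mem_convexHull_of_exists_fintype p _ (fun i ↦ (hv i).1) hp (fun i ↦ ?_) rfl
  obtain ⟨-, unit, schmidtRank⟩ := hv i
  exact realign_ketBra_mem_lowRankBall unit unit schmidtRank schmidtRank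

end Realignment

/-- if `ρ` is a density matrix with `SN(ρ) ≤ k`, then
`‖L(ρ)‖_{(k²,2)}° ≤ 1`. -/
theorem dual_k2_realign_le_one {m n k : ℕ} (hk1 : 1 ≤ k) (hk : k ≤ min m n)
    (ρ : Matrix (Fin m × Fin n) (Fin m × Fin n) ℂ) (hρ : IsDensity ρ)
    (hSN : SchmidtNumLE k ρ) :
    dualNormM (kNorm (k ^ 2)) (realign ρ) ≤ 1 := by
  exact dualNormM_kNorm_le_one_of_mem_convexHull (realign_mem_convexHull_lowRankBall hSN)

end Ent
end
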